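/- Let M be a finite-dimensional Λ-module with socseq(M) = reverse(rad(M)). Then the pair (rad(M), socseq(M)) is a minimal element of rad-soc(dim_K M): every finite-dimensional Λ-module N with dim_K N = dim_K M, rad(N) ≼ rad(M) and socseq(N) ≼ socseq(M) satisfies rad(N) = rad(M) and socseq(N) = socseq(M). -/

import Mathlib

noncomputable section

/-- The relation on the free algebra killing all products of `L+1` generators. -/
def TruncRel (K : Type*) [Field K] (r L : ℕ) :
    FreeAlgebra K (Fin r) → FreeAlgebra K (Fin r) → Prop := fun a b =>
  (∃ f : Fin (L + 1) → Fin r, a = (List.ofFn fun j => FreeAlgebra.ι K (f j)).prod) ∧ b = 0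

/-- The local truncated path algebra with `r` loops and Loewy length `L+1`:
the quotient of `K⟨X_1,…,X_r⟩` by the two-sided ideal generated by all products
of `L+1` generators. -/
def TruncAlg (K : Type*) [Field K] (r L : ℕ) : Type _ := RingQuot (TruncRel K r L)

instance (K : Type*) [Field K] (r L : ℕ) : Ring (TruncAlg K r L) :=
  inferInstanceAs (Ring (RingQuot _))

instance (K : Type*) [Field K] (r L : ℕ) : Algebra K (TruncAlg K r L) :=
  inferInstanceAs (Algebra K (RingQuot _))

/-- The images of the generators `X i` in the truncated algebra. -/
def gen (K : Type*) [Field K] (r L : ℕ) (i : Fin r) : TruncAlg K r L :=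
  RingQuot.mkAlgHom K (TruncRel K r L) (FreeAlgebra.ι K i)

/-- The two-sided ideal `J` of `Λ` generated by the images of `X_1,…,X_r`,
realized as a `K`-submodule of `Λ`. -/
def Jrad (K : Type*) [Field K] (r L : ℕ) : Submodule K (TruncAlg K r L) :=
  ⊤ * Submodule.span K (Set.range (gen K r L)) * ⊤

/-- `J^l M`, the submodule of `M` given by the action of `J^l`. -/
def jpow (K : Type*) [Field K] (r L : ℕ) (M : Type*) [AddCommGroup M] [Module K M]
    [Module (TruncAlg K r L) M] [IsScalarTower K (TruncAlg K r L) M] (l : ℕ) :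
    Submodule (TruncAlg K r L) M :=
  Submodule.span (TruncAlg K r L)
    {x : M | ∃ a ∈ (Jrad K r L ^ l : Submodule K (TruncAlg K r L)), ∃ m : M, x = a • m}

/-- The socle of a module: the supremum of all simple submodules. -/
def socle (R N : Type*) [Ring R] [AddCommGroup N] [Module R N] : Submodule R N :=
  sSup {p : Submodule R N | IsSimpleModule R ↥p}

/-- The socle series: `socSeries R M l` is `soc_{l-1} M`, so `socSeries R M 0 = soc_{-1} M = ⊥`
and `socSeries R M (l+1) = soc_l M` is the preimage in `M` of `soc (M / soc_{l-1} M)`. -/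
def socSeries (R M : Type*) [Ring R] [AddCommGroup M] [Module R M] : ℕ → Submodule R M
  | 0 => ⊥
  | l + 1 => Submodule.comap (socSeries R M l).mkQ (socle R (M ⧸ socSeries R M l))

/-- Dimension of the subquotient `q / (p ⊓ q)`; for `p ≤ q` this is `dim (q/p)`. -/
def quotDim (K M : Type*) [Field K] [AddCommGroup M] [Module K M]
    (p q : Submodule K M) : ℕ :=
  Module.finrank K (↥q ⧸ Submodule.comap q.subtype p)

/-- The radical layering `rad(M) = (dim_K J^l M / J^{l+1} M)_{l=0,…,L}`. -/
def radLayering (K : Type*) [Field K] (r L : ℕ) (M : Type*) [AddCommGroup M] [Module K M]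
    [Module (TruncAlg K r L) M] [IsScalarTower K (TruncAlg K r L) M] : Fin (L + 1) → ℕ :=
  fun l => quotDim K M ((jpow K r L M ((l : ℕ) + 1)).restrictScalars K)
    ((jpow K r L M (l : ℕ)).restrictScalars K)

/-- The socle layering `socseq(M) = (dim_K soc_l M / soc_{l-1} M)_{l=0,…,L}`. -/
def socLayering (K : Type*) [Field K] (r L : ℕ) (M : Type*) [AddCommGroup M] [Module K M]
    [Module (TruncAlg K r L) M] [IsScalarTower K (TruncAlg K r L) M] : Fin (L + 1) → ℕ :=
  fun l => quotDim K M ((socSeries (TruncAlg K r L) M (l : ℕ)).restrictScalars K)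
    ((socSeries (TruncAlg K r L) M ((l : ℕ) + 1)).restrictScalars K)

/-- The dominance order on `ℕ^{L+1}`: `a ≼ b` iff all partial sums satisfy `≤`. -/
def DomLE (L : ℕ) (a b : Fin (L + 1) → ℕ) : Prop :=
  ∀ l : Fin (L + 1), ∑ j ∈ Finset.Iic l, a j ≤ ∑ j ∈ Finset.Iic l, b j

/-- `reverse (a_0, …, a_L) = (a_L, …, a_0)`. -/
def revTuple (L : ℕ) (a : Fin (L + 1) → ℕ) : Fin (L + 1) → ℕ := fun l => a l.rev

/-!
A nonzero vector killed by all generators spans a simple submodule. As the generators map `J ^ l N`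
into `J ^ (l + 1) N`, descending induction from `J ^ (L + 1) N = 0` gives `J ^ l N ≤ soc_{L - l} N`,
and hence `reverse (rad N) ≼ socseq N` for every `N`. Reversal inverts the dominance order between
tuples with equal total, so under the assumptions of the theorem
`reverse (rad M) ≼ reverse (rad N) ≼ socseq N ≼ socseq M = reverse (rad M)`.
-/

section Generators

variable {K A : Type*} [CommSemiring K] [Semiring A] [Algebra K A] {s : Set A}

theorem span_closure_of_adjoin_eq_top (hs : Algebra.adjoin K s = ⊤) :
    Submodule.span K (Submonoid.closure s : Set A) = ⊤ := by
  rw [← Algebra.adjoin_eq_span, hs, Algebra.top_toSubmodule]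

theorem one_sup_span_mul_top (hs : Algebra.adjoin K s = ⊤) :
    1 ⊔ Submodule.span K s * ⊤ = ⊤ := by
  refine top_unique ((span_closure_of_adjoin_eq_top hs).ge.trans (Submodule.span_le.2 ?_))
  intro c hc
  induction hc using Submonoid.closure_induction_left with
  | one => exact Submodule.mem_sup_left (Submodule.one_le.1 le_rfl)
  | mul_left a ha c _ _ =>
    exact Submodule.mem_sup_right (Submodule.mul_mem_mul (Submodule.subset_span ha) trivial)

theorem one_sup_top_mul_span (hs : Algebra.adjoin K s = ⊤) :
    1 ⊔ ⊤ * Submodule.span K s = ⊤ := by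
  refine top_unique ((span_closure_of_adjoin_eq_top hs).ge.trans (Submodule.span_le.2 ?_))
  intro c hc
  induction hc using Submonoid.closure_induction_right with
  | one => exact Submodule.mem_sup_left (Submodule.one_le.1 le_rfl)
  | mul_right c _ a ha _ =>
    exact Submodule.mem_sup_right (Submodule.mul_mem_mul trivial (Submodule.subset_span ha))

theorem commute_top_span (hs : Algebra.adjoin K s = ⊤) :
    Commute ⊤ (Submodule.span K s) :=
  calc ⊤ * Submodule.span K s
    _ = (1 ⊔ Submodule.span K s * ⊤) * Submodule.span K s := by rw [one_sup_span_mul_top hs]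
    _ = Submodule.span K s * (1 ⊔ ⊤ * Submodule.span K s) := by
      rw [Submodule.sup_mul, Submodule.mul_sup, one_mul, mul_one, mul_assoc]
    _ = Submodule.span K s * ⊤ := by rw [one_sup_top_mul_span hs]

variable {M : Type*} [AddCommMonoid M] [Module K M] [Module A M] [IsScalarTower K A M]

theorem restrictScalars_span_smul_top {I : Submodule K A} (hI : ⊤ * I ≤ I * ⊤) :
    (Submodule.span A {x : M | ∃ a ∈ I, ∃ m : M, x = a • m}).restrictScalars K = I • ⊤ := by
  have hstable (c : A) {x : M} (hx : x ∈ I • (⊤ : Submodule K M)) :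
      c • x ∈ I • (⊤ : Submodule K M) := by
    have hcx : c • x ∈ (⊤ * I : Submodule K A) • (⊤ : Submodule K M) := by
      rw [← smul_eq_mul, Submodule.smul_assoc]
      exact Submodule.smul_mem_smul trivial hx
    have hle : (I * ⊤ : Submodule K A) • (⊤ : Submodule K M) ≤ I • ⊤ := by
      rw [← smul_eq_mul, Submodule.smul_assoc]
      exact Submodule.smul_mono le_rfl le_top
    exact hle (Submodule.smul_mono_left hI hcx)
  refine le_antisymm (fun x hx => ?_)
    (Submodule.smul_le.2 fun a ha m _ => Submodule.subset_span ⟨a, ha, m, rfl⟩)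
  induction hx using Submodule.span_induction with
  | mem x hx =>
    obtain ⟨a, ha, m, rfl⟩ := hx
    exact Submodule.smul_mem_smul ha trivial
  | zero => exact zero_mem _
  | add x y _ _ hx hy => exact add_mem hx hy
  | smul c x _ hx => exact hstable c hx

theorem smul_mem_span_singleton_of_adjoin_eq_top (hs : Algebra.adjoin K s = ⊤) {x : M}
    (hx : ∀ g ∈ s, g • x = 0) (a : A) : a • x ∈ K ∙ x := by
  have ha : a ∈ Algebra.adjoin K s := hs ▸ Algebra.mem_top
  induction ha using Algebra.adjoin_induction with
  | mem g hg => rw [hx g hg]; exact zero_mem _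
  | algebraMap c =>
    rw [algebraMap_smul]; exact Submodule.smul_mem _ c (Submodule.mem_span_singleton_self x)
  | add a b _ _ iha ihb => rw [add_smul]; exact add_mem iha ihb
  | mul a b _ _ iha ihb =>
    obtain ⟨c, hc⟩ := Submodule.mem_span_singleton.1 ihb
    rw [mul_smul, ← hc, smul_comm]
    exact Submodule.smul_mem _ c iha

end Generators

section Socle

variable {K A : Type*} [Field K] [Ring A] [Algebra K A] {s : Set A}
  {M : Type*} [AddCommGroup M] [Module K M] [Module A M] [IsScalarTower K A M]

theorem mem_socle_of_forall_smul_eq_zero (hs : Algebra.adjoin K s = ⊤) {x : M}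
    (hx : ∀ g ∈ s, g • x = 0) : x ∈ socle A M := by
  rcases eq_or_ne x 0 with rfl | hx0
  · exact zero_mem _
  have hline : (A ∙ x).restrictScalars K ≤ K ∙ x := by
    intro y hy
    obtain ⟨a, rfl⟩ := Submodule.mem_span_singleton.1 hy
    exact smul_mem_span_singleton_of_adjoin_eq_top hs hx a
  have hatom : IsAtom (A ∙ x) := by
    refine ⟨by simpa using hx0, fun p hp => ?_⟩
    have hlt : p.restrictScalars K < K ∙ x :=
      ((Submodule.restrictScalars_lt K).2 hp).trans_le hline
    simpa using (nonzero_span_atom x hx0).2 _ hlt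
  exact le_sSup (a := A ∙ x) (isSimpleModule_iff_isAtom.2 hatom)
    (Submodule.mem_span_singleton_self x)

theorem mem_socSeries_succ_of_forall_smul_mem (hs : Algebra.adjoin K s = ⊤) {l : ℕ} {x : M}
    (hx : ∀ g ∈ s, g • x ∈ socSeries A M l) : x ∈ socSeries A M (l + 1) :=
  mem_socle_of_forall_smul_eq_zero hs fun g hg =>
    (Submodule.Quotient.mk_eq_zero (socSeries A M l)).2 (hx g hg)

theorem monotone_socSeries (R M : Type*) [Ring R] [AddCommGroup M] [Module R M] :
    Monotone (socSeries R M) :=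
  monotone_nat_of_le_succ fun l => Submodule.le_comap_mkQ (socSeries R M l) _

end Socle

section TruncAlg

variable (K : Type*) [Field K] (r L : ℕ)

theorem adjoin_range_gen : Algebra.adjoin K (Set.range (gen K r L)) = ⊤ := by
  have hmap := AlgHom.map_adjoin (RingQuot.mkAlgHom K (TruncRel K r L))
    (Set.range (FreeAlgebra.ι K))
  rw [FreeAlgebra.adjoin_range_ι, Algebra.map_top,
    (AlgHom.range_eq_top _).2 (RingQuot.mkAlgHom_surjective K _), ← Set.range_comp] at hmap
  exact hmap.symm

theorem prod_ofFn_gen (f : Fin (L + 1) → Fin r) :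
    (List.ofFn fun j => gen K r L (f j)).prod = 0 := by
  have hrel := RingQuot.mkAlgHom_rel K (s := TruncRel K r L) ⟨⟨f, rfl⟩, rfl⟩
  rw [map_zero, map_list_prod, List.map_ofFn] at hrel
  exact hrel

theorem span_range_gen_pow : Submodule.span K (Set.range (gen K r L)) ^ (L + 1) = ⊥ := by
  rw [Submodule.span_pow, Submodule.span_eq_bot]
  intro x hx
  obtain ⟨f, rfl⟩ := Set.mem_pow.1 hx
  choose g hg using fun i => (f i).2
  simp only [← hg]
  exact prod_ofFn_gen K r L g

theorem gen_mem_Jrad (i : Fin r) : gen K r L i ∈ Jrad K r L := by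
  have hi : gen K r L i ∈ Submodule.span K (Set.range (gen K r L)) :=
    Submodule.subset_span ⟨i, rfl⟩
  simpa [Jrad] using Submodule.mul_mem_mul (Submodule.mul_mem_mul
    (Submodule.mem_top (x := 1)) hi) (Submodule.mem_top (x := 1))

theorem commute_top_Jrad : Commute ⊤ (Jrad K r L) :=
  ((Commute.refl ⊤).mul_right (commute_top_span (adjoin_range_gen K r L))).mul_right (.refl ⊤)

theorem Jrad_pow_eq_bot : Jrad K r L ^ (L + 1) = ⊥ := by
  have hcomm := commute_top_span (adjoin_range_gen K r L)
  rw [Jrad, ((Commute.refl ⊤).mul_left hcomm.symm).mul_pow, hcomm.mul_pow, span_range_gen_pow,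
    Submodule.mul_bot, Submodule.bot_mul]

end TruncAlg

section Modules

variable (K : Type*) [Field K] (r L : ℕ) (M : Type*) [AddCommGroup M] [Module K M]
  [Module (TruncAlg K r L) M] [IsScalarTower K (TruncAlg K r L) M]

theorem restrictScalars_jpow (l : ℕ) :
    (jpow K r L M l).restrictScalars K = Jrad K r L ^ l • (⊤ : Submodule K M) :=
  restrictScalars_span_smul_top ((commute_top_Jrad K r L).pow_right l).eq.le

theorem restrictScalars_jpow_succ (l : ℕ) :
    (jpow K r L M (l + 1)).restrictScalars K =
      Jrad K r L • (jpow K r L M l).restrictScalars K := by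
  rw [restrictScalars_jpow, restrictScalars_jpow, pow_succ', ← smul_eq_mul, Submodule.smul_assoc]

theorem jpow_zero : jpow K r L M 0 = ⊤ := by
  rw [← Submodule.restrictScalars_eq_top_iff K, restrictScalars_jpow, pow_zero,
    Submodule.one_smul]

theorem jpow_add_one_eq_bot : jpow K r L M (L + 1) = ⊥ := by
  rw [← Submodule.restrictScalars_eq_bot_iff K, restrictScalars_jpow, Jrad_pow_eq_bot,
    Submodule.bot_smul]

theorem antitone_jpow : Antitone (jpow K r L M) := by
  refine antitone_nat_of_succ_le fun l => ?_
  rw [← Submodule.restrictScalars_le K, restrictScalars_jpow_succ]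
  exact Submodule.smul_le.2 fun a _ x hx => (jpow K r L M l).smul_mem a hx

variable {M} in
theorem gen_smul_mem_jpow_succ {l : ℕ} {x : M} (hx : x ∈ jpow K r L M l) (i : Fin r) :
    gen K r L i • x ∈ jpow K r L M (l + 1) := by
  rw [← Submodule.restrictScalars_mem K, restrictScalars_jpow_succ]
  exact Submodule.smul_mem_smul (gen_mem_Jrad K r L i) hx

theorem jpow_le_socSeries {k l : ℕ} (h : L + 1 ≤ l + k) :
    jpow K r L M l ≤ socSeries (TruncAlg K r L) M k := by
  induction k generalizing l with
  | zero => exact (antitone_jpow K r L M h).trans (jpow_add_one_eq_bot K r L M).le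
  | succ k ih =>
    intro x hx
    refine mem_socSeries_succ_of_forall_smul_mem (adjoin_range_gen K r L) ?_
    rintro _ ⟨i, rfl⟩
    exact ih (by omega) (gen_smul_mem_jpow_succ K r L hx i)

end Modules

section Layerings

theorem quotDim_eq_finrank_sub_finrank {K M : Type*} [Field K] [AddCommGroup M] [Module K M]
    {p q : Submodule K M} [FiniteDimensional K q] (h : p ≤ q) :
    quotDim K M p q = Module.finrank K q - Module.finrank K p := by
  rw [quotDim, Submodule.finrank_quotient, (Submodule.comapSubtypeEquivOfLe h).finrank_eq]

theorem sum_Ico_tsub_of_antitone {α : Type*} [AddCommMonoid α] [PartialOrder α]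
    [CanonicallyOrderedAdd α] [Sub α] [OrderedSub α] {f : ℕ → α} (hf : Antitone f) {m n : ℕ}
    (h : m ≤ n) :
    ∑ i ∈ Finset.Ico m n, (f i - f (i + 1)) = f m - f n := by
  induction n, h using Nat.le_induction with
  | base => simp
  | succ n hmn ih =>
    rw [Finset.sum_Ico_succ_top hmn, ih]
    exact tsub_add_tsub_cancel (hf hmn) (hf n.le_succ)

variable (K : Type*) [Field K] (r L : ℕ) (M : Type*) [AddCommGroup M] [Module K M]
  [Module (TruncAlg K r L) M] [IsScalarTower K (TruncAlg K r L) M] [FiniteDimensional K M]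

theorem sum_Ici_radLayering (l : Fin (L + 1)) :
    ∑ j ∈ Finset.Ici l, radLayering K r L M j =
      Module.finrank K ((jpow K r L M l).restrictScalars K) := by
  let d : ℕ → ℕ := fun i => Module.finrank K ((jpow K r L M i).restrictScalars K)
  have hd : Antitone d := fun _ _ hij => Submodule.finrank_mono (antitone_jpow K r L M hij)
  have hd_last : d (L + 1) = 0 := by
    simp only [d]
    rw [jpow_add_one_eq_bot, Submodule.restrictScalars_bot, finrank_bot]
  calc ∑ j ∈ Finset.Ici l, radLayering K r L M j
    _ = ∑ j ∈ Finset.Ici l, (d j - d (j + 1)) :=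
      Finset.sum_congr rfl fun j _ =>
        quotDim_eq_finrank_sub_finrank (antitone_jpow K r L M (j : ℕ).le_succ)
    _ = ∑ i ∈ Finset.Ico (l : ℕ) (L + 1), (d i - d (i + 1)) := by
      rw [← Fin.map_valEmbedding_Ici, Finset.sum_map]; rfl
    _ = d l - d (L + 1) := sum_Ico_tsub_of_antitone hd l.is_lt.le
    _ = d l := by rw [hd_last, tsub_zero]

theorem sum_radLayering : ∑ j, radLayering K r L M j = Module.finrank K M := by
  have hsum := sum_Ici_radLayering K r L M 0
  rwa [← bot_eq_zero, Finset.Ici_bot, bot_eq_zero, Fin.val_zero, jpow_zero,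
    Submodule.restrictScalars_top, finrank_top] at hsum

theorem sum_Iic_socLayering (l : Fin (L + 1)) :
    ∑ j ∈ Finset.Iic l, socLayering K r L M j =
      Module.finrank K ((socSeries (TruncAlg K r L) M (l + 1)).restrictScalars K) := by
  let d : ℕ → ℕ := fun i =>
    Module.finrank K ((socSeries (TruncAlg K r L) M i).restrictScalars K)
  have hd : Monotone d := fun _ _ hij => Submodule.finrank_mono (monotone_socSeries _ M hij)
  have hd_zero : d 0 = 0 := by
    simp only [d]
    rw [socSeries, Submodule.restrictScalars_bot, finrank_bot]
  calc ∑ j ∈ Finset.Iic l, socLayering K r L M j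
    _ = ∑ j ∈ Finset.Iic l, (d (j + 1) - d j) :=
      Finset.sum_congr rfl fun j _ =>
        quotDim_eq_finrank_sub_finrank (monotone_socSeries _ M (j : ℕ).le_succ)
    _ = ∑ i ∈ Finset.range (l + 1), (d (i + 1) - d i) := by
      rw [Nat.range_succ_eq_Iic, ← Fin.map_valEmbedding_Iic, Finset.sum_map]; rfl
    _ = d (l + 1) - d 0 := Finset.sum_range_tsub hd _
    _ = d (l + 1) := by rw [hd_zero, tsub_zero]

end Layerings

section Dominance

variable {L : ℕ} {a b c : Fin (L + 1) → ℕ}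

theorem revTuple_injective : Function.Injective (revTuple L) :=
  Fin.rev_surjective.injective_comp_right

theorem sum_Iic_revTuple (a : Fin (L + 1) → ℕ) (l : Fin (L + 1)) :
    ∑ j ∈ Finset.Iic l, revTuple L a j = ∑ j ∈ Finset.Ici l.rev, a j := by
  rw [← Fin.map_revPerm_Iic, Finset.sum_map]
  rfl

theorem DomLE.trans (hab : DomLE L a b) (hbc : DomLE L b c) : DomLE L a c :=
  fun l => (hab l).trans (hbc l)

theorem DomLE.sum_Iio_le (h : DomLE L a b) (l : Fin (L + 1)) :
    ∑ j ∈ Finset.Iio l, a j ≤ ∑ j ∈ Finset.Iio l, b j := by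
  rcases eq_or_ne l 0 with rfl | hl
  · rw [← bot_eq_zero, Finset.Iio_bot, Finset.sum_empty, Finset.sum_empty]
  · rw [← Fin.Iic_sub_one_eq_Iio (Fin.pos_of_ne_zero hl)]
    exact h _

theorem DomLE.antisymm (hab : DomLE L a b) (hba : DomLE L b a) : a = b := by
  funext l
  have hIic := (hab l).antisymm (hba l)
  rw [← Finset.sum_Iio_add_eq_sum_Iic, ← Finset.sum_Iio_add_eq_sum_Iic,
    (hab.sum_Iio_le l).antisymm (hba.sum_Iio_le l)] at hIic
  exact Nat.add_left_cancel hIic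

theorem DomLE.revTuple_of_sum_eq (h : DomLE L a b) (hsum : ∑ j, a j = ∑ j, b j) :
    DomLE L (revTuple L b) (revTuple L a) := by
  intro l
  have hsplit (f : Fin (L + 1) → ℕ) :
      ∑ j ∈ Finset.Iio l.rev, f j + ∑ j ∈ Finset.Ici l.rev, f j = ∑ j, f j := by
    rw [← Finset.sum_add_sum_compl (Finset.Iio l.rev)]
    congr 2
    ext j
    simp
  rw [sum_Iic_revTuple, sum_Iic_revTuple]
  have hIio := h.sum_Iio_le l.rev
  have ha := hsplit a
  have hb := hsplit b
  omega

end Dominance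

theorem revTuple_radLayering_domLE_socLayering (K : Type*) [Field K] (r L : ℕ) (M : Type*)
    [AddCommGroup M] [Module K M] [Module (TruncAlg K r L) M]
    [IsScalarTower K (TruncAlg K r L) M] [FiniteDimensional K M] :
    DomLE L (revTuple L (radLayering K r L M)) (socLayering K r L M) := by
  intro l
  rw [sum_Iic_revTuple, sum_Ici_radLayering, sum_Iic_socLayering]
  refine Submodule.finrank_mono (jpow_le_socSeries K r L M ?_)
  rw [Fin.val_rev]
  omega

theorem stmt5_general (K : Type*) [Field K] (r L : ℕ)
    (M : Type*) [AddCommGroup M] [Module K M] [Module (TruncAlg K r L) M]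
    [IsScalarTower K (TruncAlg K r L) M] [FiniteDimensional K M]
    (N : Type*) [AddCommGroup N] [Module K N] [Module (TruncAlg K r L) N]
    [IsScalarTower K (TruncAlg K r L) N] [FiniteDimensional K N]
    (h : socLayering K r L M = revTuple L (radLayering K r L M))
    (hdim : Module.finrank K N = Module.finrank K M)
    (hrad : DomLE L (radLayering K r L N) (radLayering K r L M))
    (hsoc : DomLE L (socLayering K r L N) (socLayering K r L M)) :
    radLayering K r L N = radLayering K r L M ∧
      socLayering K r L N = socLayering K r L M := by
  have hsum : ∑ j, radLayering K r L N j = ∑ j, radLayering K r L M j := by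
    rw [sum_radLayering, sum_radLayering, hdim]
  have hrev : DomLE L (socLayering K r L M) (revTuple L (radLayering K r L N)) :=
    h ▸ hrad.revTuple_of_sum_eq hsum
  have hN := revTuple_radLayering_domLE_socLayering K r L N
  exact ⟨revTuple_injective (((hN.trans hsoc).antisymm hrev).trans h),
    hsoc.antisymm (hrev.trans hN)⟩

/-- If `socseq M = reverse (rad M)`, then `(rad M, socseq M)` is a minimal
element of `rad-soc(dim_K M)`. -/
theorem stmt5 (K : Type) [Field K] [IsAlgClosed K] (r L : ℕ) (hr : 0 < r) (hL : 0 < L)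
    (M : Type) [AddCommGroup M] [Module K M] [Module (TruncAlg K r L) M]
    [IsScalarTower K (TruncAlg K r L) M] [FiniteDimensional K M]
    (h : socLayering K r L M = revTuple L (radLayering K r L M)) :
    ∀ (N : Type) (_ : AddCommGroup N) (_ : Module K N)
        (_ : Module (TruncAlg K r L) N) (_ : IsScalarTower K (TruncAlg K r L) N)
        (_ : FiniteDimensional K N),
      Module.finrank K N = Module.finrank K M →
      DomLE L (radLayering K r L N) (radLayering K r L M) →
      DomLE L (socLayering K r L N) (socLayering K r L M) →
      radLayering K r L N = radLayering K r L M ∧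
        socLayering K r L N = socLayering K r L M := by
  intro N _ _ _ _ _ hdim hrad hsoc
  exact stmt5_general K r L M N h hdim hrad hsoc
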